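/- Let f : 𝔻ⁿ → 𝔻 be holomorphic, C¹-smooth on the closed polydisc, and suppose f(ζ) = η for some ζ ∈ 𝕋ⁿ and η ∈ 𝕋. Suppose also that for each j = 1,…,n the one-variable function z_j ↦ f(ζ_1,…,ζ_{j-1}, z_j, ζ_{j+1},…,ζ_n) is not constant. Then there exist a neighbourhood U of ζ and a constant C > 0 such that for all sufficiently small δ > 0, the Lebesgue volume of {z ∈ 𝔻ⁿ ∩ U : |f(z) - η| ≤ δ} is at most C·δ^{n+1}. -/

import Mathlib

open MeasureTheory Metric Set ENNReal

noncomputable section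

/-- The open unit polydisc in `ℂⁿ`. -/
def polydisc (n : ℕ) : Set (Fin n → ℂ) := {z | ∀ j, ‖z j‖ < 1}

/-- The closed unit polydisc in `ℂⁿ`. -/
def closedPolydisc (n : ℕ) : Set (Fin n → ℂ) := {z | ∀ j, ‖z j‖ ≤ 1}

/-- The distinguished boundary (torus) of the polydisc. -/
def torus (n : ℕ) : Set (Fin n → ℂ) := {z | ∀ j, ‖z j‖ = 1}

theorem hopf_disc (g : ℂ → ℂ) (η : ℂ) (hη : ‖η‖ = 1) (hg : DifferentiableOn ℂ g (ball 0 1))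
    (hb : ∀ z ∈ ball (0:ℂ) 1, ‖g z‖ ≤ 1)
    (hn : ∃ z ∈ ball (0:ℂ) 1, ∃ w ∈ ball (0:ℂ) 1, g z ≠ g w) :
    ∃ k > (0:ℝ), ∀ z ∈ ball (0:ℂ) 1,
      k * (1 - ‖z‖) ≤ 1 - (starRingEnd ℂ η * g z).re := by
  have h0 : (0:ℂ) ∈ ball (0:ℂ) 1 := by simp
  set p : ℂ → ℂ := fun z => 1 - starRingEnd ℂ η * g z with hp
  have hpre : ∀ z, (p z).re = 1 - (starRingEnd ℂ η * g z).re := fun z => by simp [hp]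
  have hnorm : ∀ z, ‖starRingEnd ℂ η * g z‖ = ‖g z‖ := fun z => by simp [hη]
  have hpos : ∀ z ∈ ball (0:ℂ) 1, 0 ≤ (p z).re := fun z hz => by
    rw [hpre]
    have := Complex.re_le_norm (starRingEnd ℂ η * g z)
    rw [hnorm] at this
    linarith [hb z hz]
  have hpos0 : 0 < (p 0).re := by
    rcases (hpos 0 h0).lt_or_eq with h | h
    · exact h
    exfalso
    have h1 := Complex.re_le_norm (starRingEnd ℂ η * g 0)
    rw [hnorm] at h1
    rw [hpre] at h
    have hmax : IsMaxOn (norm ∘ g) (ball (0:ℂ) 1) 0 := fun z hz => by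
      have := hb z hz
      simp only [Function.comp, mem_ofPred_eq]
      linarith
    have := Complex.eqOn_of_isPreconnected_of_isMaxOn_norm (convex_ball (0:ℂ) 1).isPreconnected
      isOpen_ball hg h0 hmax
    obtain ⟨z, hz, w, hw, hne⟩ := hn
    exact hne ((this hz).trans (this hw).symm)
  have hpd : DifferentiableOn ℂ p (ball 0 1) := by
    simp only [hp]; fun_prop
  have hre : ∀ z ∈ ball (0:ℂ) 1, (p 0).re ≤ ‖p z + starRingEnd ℂ (p 0)‖ := fun z hz => by
    have := Complex.re_le_norm (p z + starRingEnd ℂ (p 0))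
    simp only [Complex.add_re, Complex.conj_re] at this
    linarith [hpos z hz]
  have hsq : ∀ z, ‖p z + starRingEnd ℂ (p 0)‖ ^ 2 - ‖p z - p 0‖ ^ 2 = 4 * (p z).re * (p 0).re := by
    intro z
    rw [← Complex.normSq_eq_norm_sq, ← Complex.normSq_eq_norm_sq, Complex.normSq_apply,
      Complex.normSq_apply]
    simp only [Complex.add_re, Complex.conj_re, Complex.add_im, Complex.conj_im, Complex.sub_re,
      Complex.sub_im]
    ring
  have key : ∀ z ∈ ball (0:ℂ) 1, ‖p z - p 0‖ ≤ ‖z‖ * ‖p z + starRingEnd ℂ (p 0)‖ := by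
    intro z hz
    set h : ℂ → ℂ := fun z => (p z - p 0) / (p z + starRingEnd ℂ (p 0)) with hh
    have hne : ∀ z ∈ ball (0:ℂ) 1, p z + starRingEnd ℂ (p 0) ≠ 0 := fun z hz => by
      rw [← norm_pos_iff]; linarith [hre z hz]
    have hd : DifferentiableOn ℂ h (ball 0 1) :=
      (hpd.sub_const _).div (hpd.add_const _) hne
    have hm : MapsTo h (ball 0 1) (closedBall 0 1) := fun z hz => by
      simp only [hh, mem_closedBall_zero_iff, norm_div]
      rw [div_le_one (by linarith [hre z hz])]
      refine le_of_sq_le_sq ?_ (norm_nonneg _)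
      have := hsq z
      have := mul_nonneg (hpos z hz) hpos0.le
      linarith
    have := Complex.norm_le_norm_of_mapsTo_ball hd hm (by simp [hh]) (mem_ball_zero_iff.1 hz)
    simp only [hh, norm_div] at this
    rwa [div_le_iff₀ (by linarith [hre z hz])] at this
  refine ⟨(p 0).re / 4, by positivity, fun z hz => ?_⟩
  rw [← hpre]
  have h1 := key z hz
  have h2 := hre z hz
  have h3 := hsq z
  have hz1 : ‖z‖ < 1 := mem_ball_zero_iff.1 hz
  have hz0 := norm_nonneg z
  set A := ‖p z + starRingEnd ℂ (p 0)‖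
  set B := ‖p z - p 0‖ with hB
  have hB0 : 0 ≤ B := norm_nonneg _
  have h4 : B ^ 2 ≤ ‖z‖ * A ^ 2 := by
    have : B^2 ≤ (‖z‖ * A)^2 := by gcongr
    nlinarith [sq_nonneg A, mul_nonneg hz0 (sub_nonneg.2 hz1.le), mul_nonneg (mul_nonneg hz0 (sub_nonneg.2 hz1.le)) (sq_nonneg A)]
  have h5 : (1 - ‖z‖) * (p 0).re ^ 2 ≤ 4 * (p z).re * (p 0).re := by
    have : (p 0).re ^ 2 ≤ A ^ 2 := by gcongr
    nlinarith [mul_le_mul_of_nonneg_left this (sub_nonneg.2 hz1.le)]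
  have h6 : (p 0).re * ((1 - ‖z‖) * (p 0).re) ≤ (p 0).re * (4 * (p z).re) := by nlinarith
  have := le_of_mul_le_mul_left h6 hpos0
  linarith

theorem vol_bound (m : ℕ) (S : Set (Fin (m+1) → ℂ)) (hS : MeasurableSet S) (r s : ℝ)
    (hr1 : r ≤ 1) (hr : 0 ≤ r) (hs : 0 ≤ s)
    (h1 : ∀ z ∈ S, ∀ j, ‖z j‖ < 1 ∧ 1 - ‖z j‖ ≤ r)
    (h2 : ∀ z ∈ S, ∀ w ∈ S, (∀ j : Fin m, z j.succ = w j.succ) → ‖z 0 - w 0‖ ≤ s) :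
    volume S ≤ ENNReal.ofReal ((2 * Real.pi * r) ^ m * (Real.pi * s ^ 2)) := by
  have hmp := (volume_preserving_piFinSuccAbove (fun _ : Fin (m+1) => ℂ) 0).symm
  rw [← hmp.measure_preimage_equiv S, Measure.volume_eq_prod,
    Measure.prod_apply_symm (hmp.measurable hS)]
  set e := (MeasurableEquiv.piFinSuccAbove (fun _ : Fin (m+1) => ℂ) 0) with he
  have e0 : ∀ x y, e.symm (x, y) 0 = x := fun x y => by
    simp [he, MeasurableEquiv.piFinSuccAbove]
  have es : ∀ x y (j : Fin m), e.symm (x, y) j.succ = y j := fun x y j => by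
    simp [he, MeasurableEquiv.piFinSuccAbove]
  set A : Set ℂ := closedBall 0 1 \ ball 0 (1 - r) with hA
  have hAv : volume A ≤ ENNReal.ofReal (2 * Real.pi * r) := by
    rw [hA, measure_sdiff (ball_subset_closedBall.trans (closedBall_subset_closedBall (by linarith)))
      measurableSet_ball.nullMeasurableSet measure_ball_lt_top.ne,
      Complex.volume_closedBall, Complex.volume_ball]
    rw [show (NNReal.pi : ℝ≥0∞) = ENNReal.ofReal Real.pi by
      rw [ENNReal.ofReal, ← NNReal.coe_real_pi, Real.toNNReal_coe],
      ← ENNReal.ofReal_pow (by norm_num), ← ENNReal.ofReal_pow (by linarith),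
      ← ENNReal.ofReal_mul (by positivity), ← ENNReal.ofReal_mul (by positivity),
      ← ENNReal.ofReal_sub _ (by positivity)]
    apply ENNReal.ofReal_le_ofReal
    nlinarith [Real.pi_pos, mul_nonneg Real.pi_pos.le (sq_nonneg r)]
  set T : Set (Fin m → ℂ) := Set.univ.pi fun _ => A with hT
  have hTm : MeasurableSet T := MeasurableSet.univ_pi fun _ => by
    exact measurableSet_closedBall.diff measurableSet_ball
  have hslice : ∀ y, volume ((fun x => (x, y)) ⁻¹' (e.symm ⁻¹' S)) ≤
      T.indicator (fun _ => ENNReal.ofReal (Real.pi * s ^ 2)) y := by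
    intro y
    rcases Set.eq_empty_or_nonempty ((fun x => (x, y)) ⁻¹' (e.symm ⁻¹' S)) with h | ⟨x, hx⟩
    · rw [h]; simp
    have hx' : e.symm (x, y) ∈ S := hx
    have hyT : y ∈ T := by
      intro j _
      have := h1 _ hx' j.succ
      rw [es] at this
      simp only [hA, mem_sdiff, mem_closedBall_zero_iff, mem_ball_zero_iff, not_lt]
      exact ⟨this.1.le, by linarith⟩
    rw [Set.indicator_of_mem hyT]
    calc _ ≤ volume (closedBall x s) := by
            refine measure_mono fun w hw => ?_
            have := h2 _ hw _ hx' (fun j => by rw [es, es])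
            rw [e0, e0] at this
            rwa [mem_closedBall, dist_eq_norm]
      _ = _ := by
            rw [Complex.volume_closedBall, show (NNReal.pi : ℝ≥0∞) = ENNReal.ofReal Real.pi by
              rw [ENNReal.ofReal, ← NNReal.coe_real_pi, Real.toNNReal_coe],
              ← ENNReal.ofReal_pow hs, ← ENNReal.ofReal_mul (by positivity), mul_comm]
  refine (lintegral_mono hslice).trans ?_
  rw [lintegral_indicator_const hTm, hT, volume_pi_pi]
  simp only [Finset.prod_const, Finset.card_univ, Fintype.card_fin]
  rw [ENNReal.ofReal_mul (p := (2 * Real.pi * r) ^ m) (by positivity),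
    ENNReal.ofReal_pow (p := 2 * Real.pi * r) (by positivity)]
  exact (mul_comm _ _).trans_le (mul_le_mul' (pow_le_pow_left' hAv m) le_rfl)

theorem closedPolydisc_eq (n : ℕ) : closedPolydisc n = closedBall 0 1 := by
  ext z; simp [closedPolydisc, pi_norm_le_iff_of_nonneg]

theorem polydisc_eq (n : ℕ) : polydisc n = ball 0 1 := by
  ext z; simp [polydisc, pi_norm_lt_iff]

theorem unique_cpd (n : ℕ) : UniqueDiffOn ℝ (closedPolydisc n) := by
  rw [closedPolydisc_eq]
  refine uniqueDiffOn_convex (convex_closedBall 0 1) ⟨0, ?_⟩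
  exact ball_subset_interior_closedBall (by simp)

theorem cpd_subset_closure (n : ℕ) : closedPolydisc n ⊆ closure (polydisc n) := by
  rw [closedPolydisc_eq, polydisc_eq, closure_ball _ one_ne_zero]

theorem pd_subset (n : ℕ) : polydisc n ⊆ closedPolydisc n := fun _ hz j => (hz j).le

theorem L_linear (n : ℕ) (f : (Fin n → ℂ) → ℂ)
    (hhol : DifferentiableOn ℂ f (polydisc n))
    (hsm : ContDiffOn ℝ 1 f (closedPolydisc n)) (v : Fin n → ℂ) :
    ∀ z ∈ closedPolydisc n, fderivWithin ℝ f (closedPolydisc n) z (Complex.I • v) =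
      Complex.I • fderivWithin ℝ f (closedPolydisc n) z v := by
  have hc := hsm.continuousOn_fderivWithin (unique_cpd n) le_rfl
  refine Set.EqOn.of_subset_closure (s := polydisc n) ?_ ?_ ?_ (pd_subset n) (cpd_subset_closure n)
  · intro z hz
    have ho : IsOpen (polydisc n) := by rw [polydisc_eq]; exact isOpen_ball
    have h1 : closedPolydisc n ∈ nhds z := Filter.mem_of_superset (ho.mem_nhds hz) (pd_subset n)
    have h2 : DifferentiableAt ℂ f z := hhol.differentiableAt (ho.mem_nhds hz)
    simp only [fderivWithin_of_mem_nhds h1, h2.fderiv_restrictScalars ℝ]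
    simp
  · exact hc.clm_apply continuousOn_const
  · exact (hc.clm_apply continuousOn_const).const_smul Complex.I

theorem f_le_one (n : ℕ) (f : (Fin n → ℂ) → ℂ)
    (hsm : ContDiffOn ℝ 1 f (closedPolydisc n))
    (hmap : ∀ z ∈ polydisc n, ‖f z‖ < 1) : ∀ z ∈ closedPolydisc n, ‖f z‖ ≤ 1 := by
  have hcl : closure (polydisc n) = closedPolydisc n := by
    rw [closedPolydisc_eq, polydisc_eq, closure_ball _ one_ne_zero]
  have : MapsTo f (closure (polydisc n)) (closure (closedBall 0 1)) := by
    refine MapsTo.closure_of_continuousOn (fun z hz => ?_) (by rw [hcl]; exact hsm.continuousOn)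
    simpa using (hmap z hz).le
  intro z hz
  rw [hcl, isClosed_closedBall.closure_eq] at this
  simpa using this hz

theorem strict_est (n : ℕ) (f : (Fin n → ℂ) → ℂ)
    (hsm : ContDiffOn ℝ 1 f (closedPolydisc n)) (ζ : Fin n → ℂ) (hζ : ζ ∈ closedPolydisc n)
    (ε : ℝ) (hε : 0 < ε) : ∃ ρ > (0:ℝ), ∀ z ∈ closedPolydisc n, ∀ w ∈ closedPolydisc n,
      z ∈ ball ζ ρ → w ∈ ball ζ ρ →
      ‖f w - f z - fderivWithin ℝ f (closedPolydisc n) ζ (w - z)‖ ≤ ε * ‖w - z‖ := by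
  have hc := hsm.continuousOn_fderivWithin (unique_cpd n) le_rfl ζ hζ
  obtain ⟨ρ, hρ, h⟩ := Metric.continuousWithinAt_iff.1 hc ε hε
  refine ⟨ρ, hρ, fun z hz w hw hz' hw' => ?_⟩
  have hconv : Convex ℝ (closedPolydisc n ∩ ball ζ ρ) := by
    rw [closedPolydisc_eq]; exact (convex_closedBall 0 1).inter (convex_ball ζ ρ)
  refine hconv.norm_image_sub_le_of_norm_hasFDerivWithin_le'
    (f' := fderivWithin ℝ f (closedPolydisc n)) (fun x hx => ?_) (fun x hx => ?_)
    ⟨hz, hz'⟩ ⟨hw, hw'⟩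
  · exact ((hsm.differentiableOn one_ne_zero x hx.1).hasFDerivWithinAt).mono inter_subset_left
  · rw [← dist_eq_norm]; exact (h hx.1 hx.2).le

theorem update_mem (n : ℕ) (ζ : Fin n → ℂ) (hζ : ζ ∈ closedPolydisc n) (j : Fin n) (x : ℂ)
    (hx : ‖x‖ ≤ 1) : Function.update ζ j x ∈ closedPolydisc n := by
  intro i
  by_cases h : i = j
  · subst h; simpa using hx
  · simpa [h] using hζ i

theorem slice_diff (n : ℕ) (f : (Fin n → ℂ) → ℂ)
    (hhol : DifferentiableOn ℂ f (polydisc n))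
    (hsm : ContDiffOn ℝ 1 f (closedPolydisc n)) (ζ : Fin n → ℂ) (hζ : ζ ∈ closedPolydisc n)
    (j : Fin n) : DifferentiableOn ℂ (fun x => f (Function.update ζ j x)) (ball 0 1) := by
  intro x hx
  have hx1 : ‖x‖ < 1 := mem_ball_zero_iff.1 hx
  have hm := update_mem n ζ hζ j x hx1.le
  have h1 := (hsm.differentiableOn one_ne_zero _ hm).hasFDerivWithinAt
  have h2 := (hasFDerivAt_update (𝕜 := ℝ) ζ (i := j) x).hasFDerivWithinAt (s := ball 0 1)
  have hsing : ∀ y : ℂ, (ContinuousLinearMap.pi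
      (Pi.single j (ContinuousLinearMap.id ℝ ℂ)) : ℂ →L[ℝ] (Fin n → ℂ)) y = Pi.single j y := by
    intro y
    ext i
    by_cases h : i = j
    · subst h; simp
    · simp [h]
  have h3 := (h1.comp x h2 (fun y hy => update_mem n ζ hζ j y (mem_ball_zero_iff.1 hy).le)).hasFDerivAt
    (isOpen_ball.mem_nhds hx)
  refine DifferentiableAt.differentiableWithinAt ?_
  refine differentiableAt_complex_iff_differentiableAt_real.2 ⟨h3.differentiableAt, ?_⟩
  have h4 := h3.fderiv
  change fderiv ℝ (fun x => f (Function.update ζ j x)) x = _ at h4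
  rw [h4]
  have h5 := L_linear n f hhol hsm (Pi.single j 1) _ hm
  rw [← Pi.single_smul] at h5
  simpa [hsing] using h5

theorem radial_pos (n : ℕ) (f : (Fin n → ℂ) → ℂ)
    (hhol : DifferentiableOn ℂ f (polydisc n))
    (hsm : ContDiffOn ℝ 1 f (closedPolydisc n))
    (hmap : ∀ z ∈ polydisc n, ‖f z‖ < 1)
    (ζ : Fin n → ℂ) (hζ : ζ ∈ torus n) (η : ℂ) (hη : ‖η‖ = 1) (hfζ : f ζ = η) (j : Fin n)
    (hnonconst : ∃ z ∈ Metric.ball (0:ℂ) 1, ∃ w ∈ Metric.ball (0:ℂ) 1,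
      f (Function.update ζ j z) ≠ f (Function.update ζ j w)) :
    0 < (starRingEnd ℂ η *
      fderivWithin ℝ f (closedPolydisc n) ζ (Pi.single j (ζ j))).re := by
  have hζ' : ζ ∈ closedPolydisc n := fun i => (hζ i).le
  obtain ⟨k, hk, hkz⟩ := hopf_disc (fun x => f (Function.update ζ j x)) η hη
    (slice_diff n f hhol hsm ζ hζ' j)
    (fun z hz => f_le_one n f hsm hmap _ (update_mem n ζ hζ' j z (mem_ball_zero_iff.1 hz).le))
    hnonconst
  obtain ⟨ρ, hρ, hst⟩ := strict_est n f hsm ζ hζ' (k/2) (by positivity)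
  set L := fderivWithin ℝ f (closedPolydisc n) ζ with hL
  set e : Fin n → ℂ := Pi.single j (ζ j) with he
  obtain ⟨t, ht0, ht1⟩ : ∃ t : ℝ, 0 < t ∧ t < min ρ 1 := exists_between (by positivity)
  have htρ : t < ρ := ht1.trans_le (min_le_left _ _)
  have ht1' : t < 1 := ht1.trans_le (min_le_right _ _)
  set u := Function.update ζ j ((1 - t : ℝ) * ζ j) with hu
  have hnx : ‖((1 - t : ℝ) : ℂ) * ζ j‖ = 1 - t := by
    rw [norm_mul, hζ j, mul_one, Complex.norm_real, Real.norm_eq_abs, abs_of_pos (by linarith)]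
  have hue : ζ - u = t • e := by
    ext i
    by_cases h : i = j
    · subst h; simp [hu, he]; ring
    · simp [hu, he, h]
  have hen : ‖e‖ = 1 := by rw [he, Pi.norm_single, hζ j]
  have hun : ‖ζ - u‖ = t := by rw [hue, norm_smul, hen, Real.norm_eq_abs, abs_of_pos ht0, mul_one]
  have hum : u ∈ closedPolydisc n := update_mem n ζ hζ' j _ (by rw [hnx]; linarith)
  have h1 := hst u hum ζ hζ' (by rw [mem_ball', dist_eq_norm, hun]; exact htρ) (mem_ball_self hρ)
  rw [hun, hue, map_smul] at h1
  have h2 := hkz (((1 - t : ℝ) : ℂ) * ζ j) (by rw [mem_ball_zero_iff, hnx]; linarith)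
  rw [hnx] at h2
  change k * (1 - (1 - t)) ≤ 1 - (starRingEnd ℂ η * f u).re at h2
  have h3 := Complex.re_le_norm (starRingEnd ℂ η * (f ζ - f u - t • L e))
  rw [norm_mul, RCLike.norm_conj, hη, one_mul] at h3
  have h4 : (starRingEnd ℂ η * (f ζ - f u - t • L e)).re =
      1 - (starRingEnd ℂ η * f u).re - t * (starRingEnd ℂ η * L e).re := by
    have : (starRingEnd ℂ η * η).re = 1 := by
      rw [← Complex.normSq_eq_conj_mul_self, Complex.normSq_eq_norm_sq, hη]; simp
    rw [hfζ, mul_sub, mul_sub, mul_smul_comm, Complex.sub_re, Complex.sub_re, this,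
      Complex.real_smul, Complex.re_ofReal_mul]
  rw [h4] at h3
  have : 0 < t * (starRingEnd ℂ η * L e).re := by nlinarith [mul_pos hk ht0]
  exact (pos_iff_pos_of_mul_pos this).1 ht0

theorem sublevel_upper_bound (n : ℕ) (f : (Fin n → ℂ) → ℂ)
    (hhol : DifferentiableOn ℂ f (polydisc n))
    (hsm : ContDiffOn ℝ 1 f (closedPolydisc n))
    (hmap : ∀ z ∈ polydisc n, ‖f z‖ < 1)
    (ζ : Fin n → ℂ) (hζ : ζ ∈ torus n) (η : ℂ) (hη : ‖η‖ = 1) (hfζ : f ζ = η)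
    (hnonconst : ∀ j : Fin n, ∃ z ∈ Metric.ball (0:ℂ) 1, ∃ w ∈ Metric.ball (0:ℂ) 1,
      f (Function.update ζ j z) ≠ f (Function.update ζ j w)) :
    ∃ U ∈ nhds ζ, ∃ C > (0:ℝ), ∃ δ₀ > (0:ℝ), ∀ δ : ℝ, 0 < δ → δ < δ₀ →
      volume {z | z ∈ polydisc n ∩ U ∧ ‖f z - η‖ ≤ δ} ≤
        ENNReal.ofReal (C * δ ^ (n + 1)) := by
  rcases n with _ | m
  · exfalso
    have := hmap ζ (fun j => j.elim0)
    rw [hfζ, hη] at this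
    exact lt_irrefl _ this
  have hζ' : ζ ∈ closedPolydisc (m+1) := fun i => (hζ i).le
  set L := fderivWithin ℝ f (closedPolydisc (m+1)) ζ with hL
  obtain ⟨j0, hj0⟩ := Finite.exists_min fun j : Fin (m+1) =>
    (starRingEnd ℂ η * L (Pi.single j (ζ j))).re
  have hc := radial_pos (m+1) f hhol hsm hmap ζ hζ η hη hfζ j0 (hnonconst j0)
  rw [← hL] at hc
  set c := (starRingEnd ℂ η * L (Pi.single j0 (ζ j0))).re with hcdef
  obtain ⟨ρ, hρ, hst⟩ := strict_est (m+1) f hsm ζ hζ' (c/2) (by positivity)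
  rw [← hL] at hst
  have hopen : IsOpen (polydisc (m+1)) := by rw [polydisc_eq]; exact isOpen_ball
  refine ⟨ball ζ (ρ/2), ball_mem_nhds _ (by positivity),
    (2 * Real.pi * (2 / c)) ^ m * (Real.pi * (4 / c) ^ 2), by positivity, c / 2, by positivity,
    fun δ hδ hδ0 => ?_⟩
  set S := {z | z ∈ polydisc (m+1) ∩ ball ζ (ρ/2) ∧ ‖f z - η‖ ≤ δ} with hS
  have hSm : MeasurableSet S := by
    have hcont : ContinuousOn (fun z => ‖f z - η‖) (polydisc (m+1) ∩ ball ζ (ρ/2)) :=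
      (((hsm.continuousOn.mono (pd_subset _)).mono inter_subset_left).sub continuousOn_const).norm
    obtain ⟨V, hV, hVe⟩ := continuousOn_iff_isClosed.1 hcont (Iic δ) isClosed_Iic
    have : S = V ∩ (polydisc (m+1) ∩ ball ζ (ρ/2)) := by
      rw [← hVe]; ext z; simp [hS, and_comm]
    rw [this]
    exact hV.measurableSet.inter (hopen.inter isOpen_ball).measurableSet
  have hconj : ∀ x : ℂ, ‖starRingEnd ℂ η * x‖ = ‖x‖ := fun x => by simp [hη]
  have hηη : (starRingEnd ℂ η * η).re = 1 := by
    rw [← Complex.normSq_eq_conj_mul_self, Complex.normSq_eq_norm_sq, hη]; simp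
  have hmain := vol_bound m S hSm (2 * δ / c) (4 * δ / c)
    (by rw [div_le_one hc]; linarith) (by positivity) (by positivity) ?_ ?_
  · refine hmain.trans (le_of_eq ?_)
    congr 1
    rw [show 2 * Real.pi * (2 * δ / c) = (2 * Real.pi * (2 / c)) * δ by ring,
      show 4 * δ / c = 4 / c * δ by ring, mul_pow, mul_pow _ δ 2]
    ring
  · rintro z ⟨⟨hz, hzb⟩, hzδ⟩ j
    refine ⟨hz j, ?_⟩
    have hzK := pd_subset _ hz
    have ht0 : 0 < 1 - ‖z j‖ := by linarith [hz j]
    set t := 1 - ‖z j‖ with ht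
    set e : Fin (m+1) → ℂ := Pi.single j (ζ j) with he
    set w := z + t • e with hw
    have hwz : w - z = t • e := by simp [hw]
    have hen : ‖e‖ = 1 := by rw [he, Pi.norm_single, hζ j]
    have hwn : ‖w - z‖ = t := by
      rw [hwz, norm_smul, hen, Real.norm_eq_abs, abs_of_pos ht0, mul_one]
    have hwK : w ∈ closedPolydisc (m+1) := by
      intro i
      by_cases h : i = j
      · subst h
        have : w i = z i + t • ζ i := by simp [hw, he]
        rw [this]
        refine (norm_add_le _ _).trans ?_
        rw [norm_smul, hζ i, Real.norm_eq_abs, abs_of_pos ht0, ht]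
        linarith
      · simpa [hw, he, h] using hzK i
    have hzd : ‖z - ζ‖ < ρ / 2 := by rwa [mem_ball, dist_eq_norm] at hzb
    have htle : t ≤ ‖z - ζ‖ := by
      have h1 := norm_le_pi_norm (z - ζ) j
      have h2 := norm_sub_norm_le (ζ j) (z j)
      rw [hζ j, norm_sub_rev] at h2
      exact h2.trans h1
    have h1 := hst z hzK w hwK (by rw [mem_ball, dist_eq_norm]; linarith) (by
      rw [mem_ball, dist_eq_norm]
      have := norm_sub_le_norm_sub_add_norm_sub w z ζ
      linarith)
    rw [hwn, hwz, map_smul] at h1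
    have h3 := Complex.abs_re_le_norm (starRingEnd ℂ η * (f w - f z - t • L e))
    rw [hconj] at h3
    have h4 : (starRingEnd ℂ η * (f w - f z - t • L e)).re =
        (starRingEnd ℂ η * f w).re - (starRingEnd ℂ η * f z).re
          - t * (starRingEnd ℂ η * L e).re := by
      rw [mul_sub, mul_sub, mul_smul_comm, Complex.sub_re, Complex.sub_re,
        Complex.real_smul, Complex.re_ofReal_mul]
    have h5 := (Complex.re_le_norm (starRingEnd ℂ η * f w))
    rw [hconj] at h5
    have h6 := f_le_one _ f hsm hmap w hwK
    have h7 := Complex.abs_re_le_norm (starRingEnd ℂ η * (f z - η))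
    rw [hconj, mul_sub, Complex.sub_re, hηη] at h7
    have h8 := (abs_le.1 (h3.trans h1)).1
    rw [h4] at h8
    have h9 := (abs_le.1 (h7.trans hzδ)).1
    have h10 : c ≤ (starRingEnd ℂ η * L e).re := hj0 j
    have h11 := mul_le_mul_of_nonneg_left h10 ht0.le
    rw [le_div_iff₀ hc]
    linarith
  · rintro z ⟨⟨hz, hzb⟩, hzδ⟩ w ⟨⟨hw, hwb⟩, hwδ⟩ hzw
    have hsub : ball ζ (ρ/2) ⊆ ball ζ ρ := ball_subset_ball (by linarith)
    have h1 := hst w (pd_subset _ hw) z (pd_subset _ hz) (hsub hwb) (hsub hzb)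
    set v := (z 0 - w 0) / ζ 0 with hv
    have hζ0 : ζ 0 ≠ 0 := by rw [← norm_pos_iff, hζ 0]; norm_num
    have hvn : ‖v‖ = ‖z 0 - w 0‖ := by rw [hv, norm_div, hζ 0, div_one]
    set e : Fin (m+1) → ℂ := Pi.single 0 (ζ 0) with he
    have hzwe : z - w = v.re • e + v.im • (Complex.I • e) := by
      have : z - w = v • e := by
        ext i
        refine Fin.cases ?_ (fun i => ?_) i
        · simp [he, hv, hζ0]
        · simp [he, hzw i]
      rw [this]
      ext i
      simp only [Pi.smul_apply, Pi.add_apply, smul_eq_mul, Complex.real_smul]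
      conv_lhs => rw [← Complex.re_add_im v]
      ring
    have hLz : L (z - w) = v * L e := by
      rw [hzwe, map_add, map_smul, map_smul, hL, L_linear _ f hhol hsm e ζ hζ']
      simp only [smul_eq_mul, Complex.real_smul]
      conv_rhs => rw [← Complex.re_add_im v]
      ring
    have hen : ‖e‖ = 1 := by rw [he, Pi.norm_single, hζ 0]
    have hzwn : ‖z - w‖ = ‖v‖ := by
      refine le_antisymm ?_ (by rw [hvn]; exact norm_le_pi_norm (z - w) 0)
      rw [pi_norm_le_iff_of_nonneg (norm_nonneg _)]
      intro i
      refine Fin.cases ?_ (fun i => ?_) i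
      · simp [hvn]
      · simp [hzw i]
    have h2 : c ≤ ‖L e‖ := by
      have := Complex.re_le_norm (starRingEnd ℂ η * L e)
      rw [hconj] at this
      exact (hj0 0).trans this
    rw [hLz, hzwn] at h1
    have h3 : ‖f z - f w‖ ≤ 2 * δ := by
      have := norm_sub_le_norm_sub_add_norm_sub (f z) η (f w)
      rw [norm_sub_rev η] at this
      linarith
    have h4 := norm_sub_norm_le (v * L e) (f z - f w)
    rw [norm_sub_rev (v * L e), norm_mul] at h4
    have h5 := mul_le_mul_of_nonneg_left h2 (norm_nonneg v)
    rw [← hvn, le_div_iff₀ hc]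
    linarith

end
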